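/- arXiv:0710.4234 — 2 statements merged into one kernel-verified Lean document; each statement's English description precedes it below -/
import Mathlib

section
/- Suppose there exists k > 0 such that limsup_{|θ|→∞} ∫_{{x : |x| > k}} π(x | θ) dx < 1 (PTIP). Then for every θ₁ ∈ ℝ, the transition density of the marginal Θ-chain is bounded away from zero uniformly in the starting point: inf_{θ₀ ∈ ℝ} p(θ₀, θ₁) > 0; indeed p(θ₀, θ₁) ≥ (inf_{|x| ≤ k} f₂(x − θ₁)) · ∫_{{x : |x| ≤ k}} π(x | θ₀) dx, and the right-hand factor ∫_{{|x| ≤ k}} π(x | θ₀) dx has a strictly positive infimum over θ₀ ∈ ℝ. -/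
open MeasureTheory Filter Set

noncomputable section

/-- Joint (unnormalised posterior) density `f_θ(x) = f₁(y - x) · f₂(x - θ)`. -/
def fjoint (f₁ f₂ : ℝ → ℝ) (y θ x : ℝ) : ℝ := f₁ (y - x) * f₂ (x - θ)

/-- Normalising constant `c_θ = ∫ f_θ(x) dx`. -/
def cnorm (f₁ f₂ : ℝ → ℝ) (y θ : ℝ) : ℝ := ∫ x, fjoint f₁ f₂ y θ x

/-- Conditional posterior density `π(x | θ) = f_θ(x)/c_θ`. -/
def post (f₁ f₂ : ℝ → ℝ) (y θ x : ℝ) : ℝ := fjoint f₁ f₂ y θ x / cnorm f₁ f₂ y θ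

/-- One-step transition density of the marginal Θ-chain of the centred Gibbs sampler:
`p(θ₀, θ₁) = (1/c_{θ₀}) ∫ f₂(x - θ₁) f_{θ₀}(x) dx`. -/
def gibbsTrans (f₁ f₂ : ℝ → ℝ) (y θ₀ θ₁ : ℝ) : ℝ :=
  (1 / cnorm f₁ f₂ y θ₀) * ∫ x, f₂ (x - θ₁) * fjoint f₁ f₂ y θ₀ x

/-- `n`-step transition density (for `n ≥ 1`; the value at `n = 0` is unused). -/
def gibbsTransN (f₁ f₂ : ℝ → ℝ) (y : ℝ) : ℕ → ℝ → ℝ → ℝ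
  | 0, _, _ => 0
  | 1, θ₀, θ₁ => gibbsTrans f₁ f₂ y θ₀ θ₁
  | (n + 2), θ₀, θ₁ => ∫ u, gibbsTransN f₁ f₂ y (n + 1) θ₀ u * gibbsTrans f₁ f₂ y u θ₁

/-!
The mass that `π(· | θ)` gives to a set `S` depends continuously on `θ`, by dominated convergence.
Since `f₂ > 0`, it is positive for every `θ` as soon as it is positive for one, and PTIP for `S`
keeps it away from zero outside a compact set of `θ`, so its infimum is positive. Finally
`p(θ₀, θ₁) = ∫ f₂(x - θ₁) π(x | θ₀) dx` is at least the part of this integral over a compact `S`, on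
which `f₂(· - θ₁)` has a positive minimum.
-/

section General

theorem iInf_pos_of_continuous_of_eventually_cocompact_le {X : Type*} [TopologicalSpace X]
    [Nonempty X] {g : X → ℝ} (hg : Continuous g) (hpos : ∀ x, 0 < g x) {ε : ℝ} (hε : 0 < ε)
    (hev : ∀ᶠ x in cocompact X, ε ≤ g x) : 0 < ⨅ x, g x := by
  -- The truncation `min (g x) ε` is maximal near infinity, hence attains its minimum.
  obtain ⟨z, hz⟩ : ∃ z, ∀ x, min (g z) ε ≤ min (g x) ε :=
    (hg.min continuous_const).exists_forall_le' (Classical.arbitrary X) <| hev.mono fun x hx =>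
      (min_le_right _ _).trans (le_min hx le_rfl)
  exact (lt_min (hpos z) hε).trans_le (le_ciInf fun x => (hz x).trans (min_le_left _ _))

theorem sInf_image_pos_of_isCompact {X : Type*} [TopologicalSpace X] {S : Set X} {g : X → ℝ}
    (hS : IsCompact S) (hne : S.Nonempty) (hg : ContinuousOn g S) (hpos : ∀ x ∈ S, 0 < g x) :
    0 < sInf (g '' S) := by
  obtain ⟨x, hxS, hx⟩ := (hS.image_of_continuousOn hg).sInf_mem (hne.image g)
  exact hx ▸ hpos x hxS

theorem isCompact_setOf_abs_le (k : ℝ) : IsCompact {x : ℝ | |x| ≤ k} := by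
  simp only [abs_le]
  exact isCompact_Icc

variable {α : Type*} [MeasurableSpace α] {μ : Measure α} {g h : α → ℝ}

theorem integral_mul_pos_iff_of_pos_right (hg : ∀ x, 0 ≤ g x) (hgi : Integrable g μ)
    (hh : ∀ x, 0 < h x) (hgh : Integrable (fun x => g x * h x) μ) :
    0 < ∫ x, g x * h x ∂μ ↔ 0 < ∫ x, g x ∂μ := by
  have hsupp : Function.support (fun x => g x * h x) = Function.support g := by
    ext x
    simp [(hh x).ne']
  rw [integral_pos_iff_support_of_nonneg (fun x => mul_nonneg (hg x) (hh x).le) hgh,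
    integral_pos_iff_support_of_nonneg hg hgi, hsupp]

theorem sInf_image_mul_setIntegral_le_integral_mul {S : Set α} (hS : MeasurableSet S)
    (hh : ∀ x, 0 ≤ h x) (hg : ∀ x, 0 ≤ g x) (hgi : Integrable g μ)
    (hhg : Integrable (fun x => h x * g x) μ) :
    sInf (h '' S) * ∫ x in S, g x ∂μ ≤ ∫ x, h x * g x ∂μ := by
  have hbdd : BddBelow (h '' S) := ⟨0, forall_mem_image.2 fun x _ => hh x⟩
  calc sInf (h '' S) * ∫ x in S, g x ∂μ
      = ∫ x in S, sInf (h '' S) * g x ∂μ := (integral_const_mul _ _).symm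
    _ ≤ ∫ x in S, h x * g x ∂μ :=
        setIntegral_mono_on (hgi.const_mul _).integrableOn hhg.integrableOn hS fun x hx =>
          mul_le_mul_of_nonneg_right (csInf_le hbdd (mem_image_of_mem h hx)) (hg x)
    _ ≤ ∫ x, h x * g x ∂μ :=
        setIntegral_le_integral hhg (Eventually.of_forall fun x => mul_nonneg (hh x) (hg x))

end General

section Posterior

variable {f₁ f₂ : ℝ → ℝ} {S : Set ℝ}

theorem integrable_fjoint (hf₁i : Integrable f₁) (hf₂m : Measurable f₂)
    (hf₂b : ∃ M, ∀ t, ‖f₂ t‖ ≤ M) (y θ : ℝ) : Integrable (fjoint f₁ f₂ y θ) := by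
  obtain ⟨M, hM⟩ := hf₂b
  exact (hf₁i.comp_sub_left y).mul_bdd
    (hf₂m.comp (measurable_sub_const θ)).aestronglyMeasurable
    (Eventually.of_forall fun x => hM (x - θ))

theorem continuous_setIntegral_fjoint (hf₁i : Integrable f₁) (hf₂c : Continuous f₂)
    (hf₂b : ∃ M, ∀ t, ‖f₂ t‖ ≤ M) (y : ℝ) (S : Set ℝ) :
    Continuous fun θ => ∫ x in S, fjoint f₁ f₂ y θ x := by
  have hmeas (θ : ℝ) : AEStronglyMeasurable (fjoint f₁ f₂ y θ) :=
    (integrable_fjoint hf₁i hf₂c.measurable hf₂b y θ).aestronglyMeasurable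
  obtain ⟨M, hM⟩ := hf₂b
  refine continuous_of_dominated (bound := fun x => ‖f₁ (y - x)‖ * M)
    (fun θ => (hmeas θ).restrict) (fun θ => Eventually.of_forall fun x => ?_)
    ((hf₁i.comp_sub_left y).norm.mul_const M).integrableOn
    (Eventually.of_forall fun x => ?_)
  · exact (norm_mul_le _ _).trans (mul_le_mul_of_nonneg_left (hM _) (norm_nonneg _))
  · unfold fjoint
    fun_prop

theorem setIntegral_fjoint_pos_iff (hf₁ : ∀ t, 0 ≤ f₁ t) (hf₁i : Integrable f₁)
    (hf₂m : Measurable f₂) (hf₂ : ∀ t, 0 < f₂ t) (hf₂b : ∃ M, ∀ t, ‖f₂ t‖ ≤ M) (y θ : ℝ) :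
    0 < ∫ x in S, fjoint f₁ f₂ y θ x ↔ 0 < ∫ x in S, f₁ (y - x) :=
  integral_mul_pos_iff_of_pos_right (fun x => hf₁ (y - x)) (hf₁i.comp_sub_left y).integrableOn
    (fun x => hf₂ (x - θ)) (integrable_fjoint hf₁i hf₂m hf₂b y θ).integrableOn

theorem cnorm_pos (hf₁ : ∀ t, 0 ≤ f₁ t) (hf₁int : 0 < ∫ t, f₁ t) (hf₂m : Measurable f₂)
    (hf₂ : ∀ t, 0 < f₂ t) (hf₂b : ∃ M, ∀ t, ‖f₂ t‖ ≤ M) (y θ : ℝ) : 0 < cnorm f₁ f₂ y θ := by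
  have hf₁i : Integrable f₁ := .of_integral_ne_zero hf₁int.ne'
  rw [cnorm, ← setIntegral_univ, setIntegral_fjoint_pos_iff hf₁ hf₁i hf₂m hf₂ hf₂b,
    setIntegral_univ, integral_sub_left_eq_self f₁ volume y]
  exact hf₁int

theorem setIntegral_post (f₁ f₂ : ℝ → ℝ) (y θ : ℝ) (S : Set ℝ) :
    ∫ x in S, post f₁ f₂ y θ x = (∫ x in S, fjoint f₁ f₂ y θ x) / cnorm f₁ f₂ y θ :=
  integral_div _ _

theorem gibbsTrans_eq_integral_mul_post (f₁ f₂ : ℝ → ℝ) (y θ₀ θ₁ : ℝ) :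
    gibbsTrans f₁ f₂ y θ₀ θ₁ = ∫ x, f₂ (x - θ₁) * post f₁ f₂ y θ₀ x := by
  simp only [gibbsTrans, post, ← mul_div_assoc, integral_div, one_div, inv_mul_eq_div]

theorem post_nonneg (hf₁ : ∀ t, 0 ≤ f₁ t) (hf₂ : ∀ t, 0 ≤ f₂ t) (y θ x : ℝ) :
    0 ≤ post f₁ f₂ y θ x :=
  have hjoint (z : ℝ) : 0 ≤ fjoint f₁ f₂ y θ z := mul_nonneg (hf₁ _) (hf₂ _)
  div_nonneg (hjoint x) (integral_nonneg hjoint)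

theorem integrable_post (hf₁i : Integrable f₁) (hf₂m : Measurable f₂)
    (hf₂b : ∃ M, ∀ t, ‖f₂ t‖ ≤ M) (y θ : ℝ) : Integrable (post f₁ f₂ y θ) :=
  (integrable_fjoint hf₁i hf₂m hf₂b y θ).div_const _

theorem setIntegral_post_add_compl (hf₁i : Integrable f₁) (hf₂m : Measurable f₂)
    (hf₂b : ∃ M, ∀ t, ‖f₂ t‖ ≤ M) {y θ : ℝ} (hc : cnorm f₁ f₂ y θ ≠ 0) (hS : MeasurableSet S) :
    (∫ x in S, post f₁ f₂ y θ x) + ∫ x in Sᶜ, post f₁ f₂ y θ x = 1 := by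
  rw [integral_add_compl hS (integrable_post hf₁i hf₂m hf₂b y θ), ← setIntegral_univ,
    setIntegral_post, setIntegral_univ]
  exact div_self hc

theorem continuous_setIntegral_post (hf₁i : Integrable f₁) (hf₂c : Continuous f₂)
    (hf₂b : ∃ M, ∀ t, ‖f₂ t‖ ≤ M) {y : ℝ} (hc : ∀ θ, cnorm f₁ f₂ y θ ≠ 0) (S : Set ℝ) :
    Continuous fun θ => ∫ x in S, post f₁ f₂ y θ x := by
  have hcont : Continuous fun θ => cnorm f₁ f₂ y θ := by
    simpa only [cnorm, setIntegral_univ] using continuous_setIntegral_fjoint hf₁i hf₂c hf₂b y univ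
  simp only [setIntegral_post]
  exact (continuous_setIntegral_fjoint hf₁i hf₂c hf₂b y S).div hcont hc

theorem sInf_mul_setIntegral_post_le_gibbsTrans (hf₁ : ∀ t, 0 ≤ f₁ t) (hf₁i : Integrable f₁)
    (hf₂m : Measurable f₂) (hf₂ : ∀ t, 0 ≤ f₂ t) (hf₂b : ∃ M, ∀ t, ‖f₂ t‖ ≤ M)
    (hS : MeasurableSet S) (y θ₀ θ₁ : ℝ) :
    sInf ((fun x => f₂ (x - θ₁)) '' S) * ∫ x in S, post f₁ f₂ y θ₀ x ≤
      gibbsTrans f₁ f₂ y θ₀ θ₁ := by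
  have hpost := integrable_post hf₁i hf₂m hf₂b y θ₀
  obtain ⟨M, hM⟩ := hf₂b
  rw [gibbsTrans_eq_integral_mul_post]
  exact sInf_image_mul_setIntegral_le_integral_mul hS (fun x => hf₂ _)
    (post_nonneg hf₁ hf₂ y θ₀) hpost
    (hpost.bdd_mul (hf₂m.comp (measurable_sub_const θ₁)).aestronglyMeasurable
      (Eventually.of_forall fun x => hM (x - θ₁)))

theorem iInf_setIntegral_post_pos (hf₁ : ∀ t, 0 ≤ f₁ t) (hf₁int : 0 < ∫ t, f₁ t)
    (hf₂c : Continuous f₂) (hf₂ : ∀ t, 0 < f₂ t) (hf₂b : ∃ M, ∀ t, ‖f₂ t‖ ≤ M) {y : ℝ}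
    (hS : MeasurableSet S)
    (hPTIP : limsup (fun θ => ∫ x in Sᶜ, post f₁ f₂ y θ x) (cocompact ℝ) < 1) :
    0 < ⨅ θ, ∫ x in S, post f₁ f₂ y θ x := by
  have hf₁i : Integrable f₁ := .of_integral_ne_zero hf₁int.ne'
  have hc := cnorm_pos hf₁ hf₁int hf₂c.measurable hf₂ hf₂b y
  have hsplit (θ : ℝ) := setIntegral_post_add_compl hf₁i hf₂c.measurable hf₂b (hc θ).ne' hS
  have hnonneg (θ : ℝ) : 0 ≤ ∫ x in S, post f₁ f₂ y θ x :=
    integral_nonneg (post_nonneg hf₁ (fun t => (hf₂ t).le) y θ)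
  have hpos_iff (θ : ℝ) : 0 < ∫ x in S, post f₁ f₂ y θ x ↔ 0 < ∫ x in S, f₁ (y - x) := by
    rw [setIntegral_post, div_pos_iff_of_pos_right (hc θ),
      setIntegral_fjoint_pos_iff hf₁ hf₁i hf₂c.measurable hf₂ hf₂b]
  obtain ⟨r, hr, hr1⟩ := exists_between hPTIP
  have hev : ∀ᶠ θ in cocompact ℝ, 1 - r ≤ ∫ x in S, post f₁ f₂ y θ x :=
    (eventually_lt_of_limsup_lt hr
      (isBoundedUnder_of ⟨1, fun θ => by linarith [hsplit θ, hnonneg θ]⟩)).mono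
      fun θ hθ => by linarith [hsplit θ]
  obtain ⟨θ', hθ'⟩ := hev.exists
  have hmass : 0 < ∫ x in S, f₁ (y - x) := (hpos_iff θ').1 ((sub_pos.2 hr1).trans_le hθ')
  exact iInf_pos_of_continuous_of_eventually_cocompact_le
    (continuous_setIntegral_post hf₁i hf₂c hf₂b (fun θ => (hc θ).ne') S)
    (fun θ => (hpos_iff θ).2 hmass) (sub_pos.2 hr1) hev

end Posterior

theorem ptip_transition_bounded_below_general {f₁ f₂ : ℝ → ℝ} {y : ℝ}
    (hf₁ : ∀ t, 0 ≤ f₁ t) (hf₁int : 0 < ∫ t, f₁ t)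
    (hf₂c : Continuous f₂) (hf₂ : ∀ t, 0 < f₂ t) (hf₂bdd : ∃ M, ∀ t, f₂ t ≤ M)
    {S : Set ℝ} (hS : IsCompact S)
    (hPTIP : limsup (fun θ => ∫ x in Sᶜ, post f₁ f₂ y θ x) (cocompact ℝ) < 1) :
    (∀ θ₁ : ℝ, 0 < ⨅ θ₀, gibbsTrans f₁ f₂ y θ₀ θ₁) ∧
    (∀ θ₀ θ₁ : ℝ,
      sInf ((fun x => f₂ (x - θ₁)) '' S) * ∫ x in S, post f₁ f₂ y θ₀ x ≤
        gibbsTrans f₁ f₂ y θ₀ θ₁) ∧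
    0 < ⨅ θ₀ : ℝ, ∫ x in S, post f₁ f₂ y θ₀ x := by
  have hf₂0 (t : ℝ) : 0 ≤ f₂ t := (hf₂ t).le
  have hf₂b : ∃ M, ∀ t, ‖f₂ t‖ ≤ M :=
    hf₂bdd.imp fun M hM t => (Real.norm_of_nonneg (hf₂0 t)).trans_le (hM t)
  have hmass := iInf_setIntegral_post_pos hf₁ hf₁int hf₂c hf₂ hf₂b hS.measurableSet hPTIP
  have hbound := sInf_mul_setIntegral_post_le_gibbsTrans hf₁
    (.of_integral_ne_zero hf₁int.ne') hf₂c.measurable hf₂0 hf₂b hS.measurableSet y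
  refine ⟨fun θ₁ => ?_, hbound, hmass⟩
  have hne : S.Nonempty := by
    rw [nonempty_iff_ne_empty]
    rintro rfl
    simp at hmass
  have hinf : 0 < sInf ((fun x => f₂ (x - θ₁)) '' S) :=
    sInf_image_pos_of_isCompact hS hne (by fun_prop) fun x _ => hf₂ (x - θ₁)
  have hbelow : BddBelow (range fun θ => ∫ x in S, post f₁ f₂ y θ x) :=
    ⟨0, forall_mem_range.2 fun θ => integral_nonneg (post_nonneg hf₁ hf₂0 y θ)⟩
  exact (mul_pos hinf hmass).trans_le <| le_ciInf fun θ₀ =>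
    (mul_le_mul_of_nonneg_left (ciInf_le hbelow θ₀) hinf.le).trans (hbound θ₀ θ₁)

/-- under PTIP, the transition density of the marginal Θ-chain is bounded
away from zero uniformly in the starting point, via the stated lower bound. -/
theorem ptip_transition_bounded_below (f₁ f₂ : ℝ → ℝ) (y : ℝ)
    (hf₁c : Continuous f₁) (hf₂c : Continuous f₂)
    (hf₁pos : ∀ t, 0 < f₁ t) (hf₂pos : ∀ t, 0 < f₂ t)
    (hf₁bdd : ∃ M, ∀ t, f₁ t ≤ M) (hf₂bdd : ∃ M, ∀ t, f₂ t ≤ M)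
    (hf₁sym : ∀ t, f₁ (-t) = f₁ t) (hf₂sym : ∀ t, f₂ (-t) = f₂ t)
    (hf₁prob : ∫ t, f₁ t = 1) (hf₂prob : ∫ t, f₂ t = 1)
    (hjint : ∀ θ, Integrable (fun x => fjoint f₁ f₂ y θ x))
    (hcpos : ∀ θ, 0 < cnorm f₁ f₂ y θ)
    (k : ℝ) (hk : 0 < k)
    (hPTIP : limsup (fun θ => ∫ x in {x : ℝ | k < |x|}, post f₁ f₂ y θ x)
      (cocompact ℝ) < 1) :
    (∀ θ₁ : ℝ, 0 < ⨅ θ₀, gibbsTrans f₁ f₂ y θ₀ θ₁) ∧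
    (∀ θ₀ θ₁ : ℝ,
      sInf ((fun x => f₂ (x - θ₁)) '' {x : ℝ | |x| ≤ k}) *
          ∫ x in {x : ℝ | |x| ≤ k}, post f₁ f₂ y θ₀ x ≤
        gibbsTrans f₁ f₂ y θ₀ θ₁) ∧
    (0 < ⨅ θ₀ : ℝ, ∫ x in {x : ℝ | |x| ≤ k}, post f₁ f₂ y θ₀ x) := by
  exact ptip_transition_bounded_below_general (fun t => (hf₁pos t).le) (hf₁prob ▸ one_pos)
    hf₂c hf₂pos hf₂bdd (isCompact_setOf_abs_le k) (by simpa only [compl_ofPred, not_le] using hPTIP)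
end
end

section
/- Suppose the model is robust in data (RID): for every z ∈ ℝ, ∫_{(-∞, θ+z]} π(x | θ) dx → F₂(z) := ∫_{(-∞, z]} f₂(u) du as |θ| → ∞. Then the marginal Θ-chain of the centred Gibbs sampler is not geometrically ergodic: there do not exist r ∈ [0,1) and a function M : ℝ → [0,∞) such that for every θ₀ ∈ ℝ and every n ≥ 1, ‖Pⁿ(θ₀, ·) − Π‖_TV ≤ M(θ₀)·rⁿ. -/
open MeasureTheory Filter Set

noncomputable section

/-!
For a chain reversible with respect to `π`, the lag `n` autocovariance `γₙ` of the event `X ∈ B`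
satisfies `γₙ² ≤ γ₀ γ₂ₙ` by Cauchy–Schwarz. If `γₙ = O(rⁿ)`, iterating this along `n = 2ᵏ` forces
`γ₁ ≤ r γ₀`, whatever the implied constant. Geometric ergodicity provides such a decay on every set
where its prefactor is bounded, hence, by exhaustion, `γ₁ ≤ r γ₀` for every `B`: each set leaks a
fixed proportion of `π B * π Bᶜ` in one step.

Under RID the increments of the Gibbs chain far out on the right converge in law to those of a
random walk whose step is the difference of two independent draws from `f₂`. This step density is
even, so detailed balance gives `c_θ / c_{θ + h} → 1`: the stationary law has a long tail, of which
any boundary layer of fixed width is a vanishing fraction. As the jumps are tight, the half-lines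
`(T, ∞)` leak a vanishing proportion of their mass, a contradiction.
-/

open ProbabilityTheory
open scoped ENNReal Topology

section Reversible

variable {α : Type*} [MeasurableSpace α] {κ η : Kernel α α} {π : Measure α} {A B : Set α}

lemma compProd_map_swap_of_isReversible [IsFiniteMeasure π] [IsFiniteKernel κ]
    (hκ : κ.IsReversible π) : (π ⊗ₘ κ).map Prod.swap = π ⊗ₘ κ := by
  refine Measure.ext_prod fun {A B} hA hB => ?_
  rw [Measure.map_apply measurable_swap (hA.prod hB), preimage_swap_prod,
    Measure.compProd_apply_prod hB hA, Measure.compProd_apply_prod hA hB, hκ hB hA]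

lemma setLIntegral_comp_of_isReversible [IsFiniteMeasure π] [IsFiniteKernel κ]
    (hκ : κ.IsReversible π) (hA : MeasurableSet A) (hB : MeasurableSet B) :
    ∫⁻ x in A, (η ∘ₖ κ) x B ∂π = ∫⁻ x, κ x A * η x B ∂π := by
  have hηB : Measurable fun x => η x B := η.measurable_coe hB
  calc ∫⁻ x in A, (η ∘ₖ κ) x B ∂π
      = ∫⁻ x in A, ∫⁻ y, η y B ∂κ x ∂π := by simp only [Kernel.comp_apply' _ _ _ hB]
    _ = ∫⁻ z in A ×ˢ univ, η z.2 B ∂(π ⊗ₘ κ) := by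
        rw [Measure.setLIntegral_compProd (by fun_prop) hA .univ]
        simp only [Measure.restrict_univ]
    _ = ∫⁻ z in univ ×ˢ A, η z.1 B ∂(π ⊗ₘ κ) := by
        nth_rewrite 1 [← compProd_map_swap_of_isReversible hκ]
        rw [setLIntegral_map (hA.prod .univ) (by fun_prop) measurable_swap, preimage_swap_prod]
        simp only [Prod.snd_swap]
    _ = ∫⁻ x, κ x A * η x B ∂π := by
        rw [Measure.setLIntegral_compProd (by fun_prop) .univ hA]
        simp only [lintegral_const, Measure.restrict_apply_univ, Measure.restrict_univ, mul_comm]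

instance isMarkovKernel_pow [IsMarkovKernel κ] (n : ℕ) : IsMarkovKernel (κ ^ n) := by
  induction n with
  | zero => exact inferInstanceAs (IsMarkovKernel Kernel.id)
  | succ n ih => exact inferInstanceAs (IsMarkovKernel ((κ ^ n) ∘ₖ κ))

lemma isReversible_pow [IsFiniteMeasure π] [IsMarkovKernel κ] (hκ : κ.IsReversible π) (n : ℕ) :
    (κ ^ n).IsReversible π := by
  induction n with
  | zero =>
    intro A B hA hB
    change ∫⁻ x in A, Kernel.id x B ∂π = ∫⁻ x in B, Kernel.id x A ∂π
    simp only [Kernel.id_apply, Measure.dirac_apply' _ hA, Measure.dirac_apply' _ hB,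
      lintegral_indicator_one hA, lintegral_indicator_one hB, Measure.restrict_apply hA,
      Measure.restrict_apply hB, inter_comm]
  | succ n ih =>
    intro A B hA hB
    calc ∫⁻ x in A, (κ ^ (n + 1)) x B ∂π
        = ∫⁻ x, κ x A * (κ ^ n) x B ∂π := by
          rw [pow_succ]; exact setLIntegral_comp_of_isReversible hκ hA hB
      _ = ∫⁻ x in B, (κ ^ (n + 1)) x A ∂π := by
          simp only [pow_succ', mul_comm (κ _ A)]
          exact (setLIntegral_comp_of_isReversible ih hB hA).symm

lemma sq_covariance_le_variance_mul_variance [IsProbabilityMeasure π] {X Y : α → ℝ}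
    (hX : MemLp X 2 π) (hY : MemLp Y 2 π) : cov[X, Y; π] ^ 2 ≤ Var[X; π] * Var[Y; π] := by
  have var_add_smul (t : ℝ) :
      Var[X + t • Y; π] = Var[Y; π] * (t * t) + 2 * cov[X, Y; π] * t + Var[X; π] := by
    rw [variance_add hX (hY.const_smul t), variance_smul, covariance_smul_right]; ring
  have := discrim_le_zero fun t => (var_add_smul t).symm ▸ variance_nonneg (X + t • Y) π
  rw [discrim] at this
  linarith

/-- The covariance of the events `X₀ ∈ B` and `X₁ ∈ B` for the stationary chain, which has
`X₀ ∼ π` and moves by `κ`; the lag `n` autocovariance is the value at `κ ^ n`. -/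
def eventCov (κ : Kernel α α) (π : Measure α) (B : Set α) : ℝ :=
  (π ⊗ₘ κ).real (B ×ˢ B) - π.real B ^ 2

lemma eventCov_one [IsProbabilityMeasure π] (hB : MeasurableSet B) :
    eventCov 1 π B = π.real B * π.real Bᶜ := by
  have : (π ⊗ₘ Kernel.id) (B ×ˢ B) = π B := by
    simp only [Measure.compProd_apply_prod hB hB, Kernel.id_apply, Measure.dirac_apply' _ hB,
      lintegral_indicator_one hB, Measure.restrict_apply hB, inter_self]
  change (π ⊗ₘ Kernel.id).real (B ×ˢ B) - _ = _
  rw [measureReal_def, this, ← measureReal_def, probReal_compl_eq_one_sub hB]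
  ring

lemma compProd_real_prod_eq_setIntegral [IsFiniteMeasure π] [IsMarkovKernel κ]
    (hA : MeasurableSet A) (hB : MeasurableSet B) :
    (π ⊗ₘ κ).real (A ×ˢ B) = ∫ x in A, (κ x).real B ∂π := by
  rw [measureReal_def, Measure.compProd_apply_prod hA hB, ← integral_toReal
    (κ.measurable_coe hB).aemeasurable (.of_forall fun x => measure_lt_top _ _)]
  rfl

lemma eventCov_add_compProd_real_prod_compl [IsProbabilityMeasure π] [IsMarkovKernel κ]
    (hB : MeasurableSet B) :
    eventCov κ π B + (π ⊗ₘ κ).real (B ×ˢ Bᶜ) = π.real B * π.real Bᶜ := by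
  have stay_or_leave : (π ⊗ₘ κ).real (B ×ˢ B) + (π ⊗ₘ κ).real (B ×ˢ Bᶜ) = π.real B := by
    rw [← measureReal_union (disjoint_compl_right.set_prod_right B B) (hB.prod hB.compl),
      ← prod_union, union_compl_self, compProd_real_prod_eq_setIntegral hB .univ]
    simp
  rw [eventCov, probReal_compl_eq_one_sub hB]
  linarith

lemma memLp_indicator_one [IsFiniteMeasure π] (hB : MeasurableSet B) (p : ℝ≥0∞) :
    MemLp (B.indicator (1 : α → ℝ)) p π :=
  (memLp_const 1).indicator hB

lemma variance_indicator_one [IsProbabilityMeasure π] (hB : MeasurableSet B) :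
    Var[B.indicator 1; π] = π.real B * π.real Bᶜ := by
  have indicator_sq : (B.indicator 1 : α → ℝ) ^ 2 = B.indicator 1 := by
    ext x; by_cases hx : x ∈ B <;> simp [hx]
  rw [variance_eq_sub (memLp_indicator_one hB 2), indicator_sq, integral_indicator_one hB,
    probReal_compl_eq_one_sub hB]
  ring

lemma memLp_kernel_real [IsFiniteMeasure π] [IsMarkovKernel κ] (hB : MeasurableSet B)
    (p : ℝ≥0∞) : MemLp (fun x => (κ x).real B) p π :=
  MemLp.of_bound (κ.measurable_coe hB).ennreal_toReal.aestronglyMeasurable 1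
    (.of_forall fun x => by
      rw [Real.norm_of_nonneg measureReal_nonneg]; exact measureReal_le_one)

lemma integral_kernel_real_of_invariant [IsMarkovKernel κ]
    (hκ : κ.Invariant π) (hB : MeasurableSet B) : ∫ x, (κ x).real B ∂π = π.real B := by
  nth_rewrite 2 [← hκ.def]
  rw [measureReal_def, Measure.bind_apply hB κ.aemeasurable, ← integral_toReal
    (κ.measurable_coe hB).aemeasurable (.of_forall fun x => measure_lt_top _ _)]
  rfl

lemma covariance_indicator_kernel_real [IsProbabilityMeasure π] [IsMarkovKernel κ]
    (hκ : κ.Invariant π) (hB : MeasurableSet B) :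
    cov[B.indicator 1, fun x => (κ x).real B; π] = eventCov κ π B := by
  have product_eq : (B.indicator 1 * fun x => (κ x).real B)
      = B.indicator fun x => (κ x).real B := by
    ext x; by_cases hx : x ∈ B <;> simp [hx]
  rw [covariance_eq_sub (memLp_indicator_one hB 2) (memLp_kernel_real hB 2), product_eq,
    integral_indicator hB, integral_indicator_one hB, integral_kernel_real_of_invariant hκ hB,
    eventCov, compProd_real_prod_eq_setIntegral hB hB, sq]

lemma variance_kernel_real [IsProbabilityMeasure π] [IsMarkovKernel κ]
    (hκ : κ.IsReversible π) (hB : MeasurableSet B) :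
    Var[fun x => (κ x).real B; π] = eventCov (κ * κ) π B := by
  have two_steps : (π ⊗ₘ (κ * κ)).real (B ×ˢ B) = ∫ x, (κ x).real B ^ 2 ∂π := by
    have : IsMarkovKernel (κ * κ) := inferInstanceAs (IsMarkovKernel (κ ∘ₖ κ))
    rw [measureReal_def, Measure.compProd_apply_prod hB hB]
    change (∫⁻ x in B, (κ ∘ₖ κ) x B ∂π).toReal = _
    rw [setLIntegral_comp_of_isReversible hκ hB hB, ← integral_toReal (f := fun x => κ x B * κ x B)
      ((κ.measurable_coe hB).mul (κ.measurable_coe hB)).aemeasurable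
      (.of_forall fun x => ENNReal.mul_lt_top (measure_lt_top _ _) (measure_lt_top _ _))]
    simp only [ENNReal.toReal_mul, measureReal_def, sq]
  rw [variance_eq_sub (memLp_kernel_real hB 2), eventCov, two_steps,
    integral_kernel_real_of_invariant hκ.invariant hB]
  rfl

lemma sq_eventCov_le [IsProbabilityMeasure π] [IsMarkovKernel κ] (hκ : κ.IsReversible π)
    (hB : MeasurableSet B) :
    eventCov κ π B ^ 2 ≤ π.real B * π.real Bᶜ * eventCov (κ * κ) π B := by
  rw [← covariance_indicator_kernel_real hκ.invariant hB, ← variance_kernel_real hκ hB,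
    ← variance_indicator_one hB]
  exact sq_covariance_le_variance_mul_variance (memLp_indicator_one hB 2)
    (memLp_kernel_real hB 2)

lemma le_mul_of_sq_le_mul_of_le_geometric {b : ℕ → ℝ} {r K : ℝ} (hr : 0 ≤ r) (hb₀ : 0 ≤ b 0)
    (hb : ∀ n, b n ^ 2 ≤ b 0 * b (n + n)) (hK : ∀ n, 1 ≤ n → b n ≤ K * r ^ n) :
    b 1 ≤ r * b 0 := by
  by_contra! hlt
  have hb₁ : 0 < b 1 := (mul_nonneg hr hb₀).trans_lt hlt
  have hb₀ : 0 < b 0 := hb₀.lt_of_ne fun h => by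
    have := hb 1; rw [← h, zero_mul] at this; exact (pow_pos hb₁ 2).not_ge this
  set l := b 1 / b 0
  have hl : 0 < l := div_pos hb₁ hb₀
  have hrl : r / l < 1 := (div_lt_one hl).2 ((lt_div_iff₀ hb₀).2 hlt)
  have lower (k : ℕ) : l ^ 2 ^ k * b 0 ≤ b (2 ^ k) := by
    induction k with
    | zero => simp [l, hb₀.ne']
    | succ k ih =>
      refine le_of_mul_le_mul_left ?_ hb₀
      calc b 0 * (l ^ 2 ^ (k + 1) * b 0) = (l ^ 2 ^ k * b 0) ^ 2 := by ring
        _ ≤ b (2 ^ k) ^ 2 := by gcongr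
        _ ≤ b 0 * b (2 ^ (k + 1)) := by rw [pow_succ 2 k, mul_two]; exact hb _
  have bound (k : ℕ) : b 0 ≤ K * (r / l) ^ 2 ^ k := by
    rw [div_pow, ← mul_div_assoc, le_div_iff₀ (by positivity), mul_comm]
    exact (lower k).trans (hK _ Nat.one_le_two_pow)
  have tends : Tendsto (fun k : ℕ => K * (r / l) ^ 2 ^ k) atTop (𝓝 (K * 0)) :=
    ((tendsto_pow_atTop_nhds_zero_of_lt_one (by positivity) hrl).comp
      (tendsto_pow_atTop_atTop_of_one_lt (one_lt_two (α := ℕ)))).const_mul K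
  exact hb₀.not_ge (by simpa using ge_of_tendsto' tends bound)

lemma eventCov_le_of_forall_pow_real_sub_le [IsProbabilityMeasure π] [IsMarkovKernel κ]
    (hκ : κ.IsReversible π) (hB : MeasurableSet B) {r K : ℝ} (hr : 0 ≤ r)
    (hK : ∀ x ∈ B, ∀ n, 1 ≤ n → ((κ ^ n) x).real B - π.real B ≤ K * r ^ n) :
    eventCov κ π B ≤ r * (π.real B * π.real Bᶜ) := by
  rw [← eventCov_one hB, ← pow_one κ, ← pow_zero κ]
  refine le_mul_of_sq_le_mul_of_le_geometric (b := fun n => eventCov (κ ^ n) π B)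
    (K := K * π.real B) hr ?_ (fun n => ?_) fun n hn => ?_
  · rw [pow_zero, eventCov_one hB]; positivity
  · rw [pow_zero, eventCov_one hB, pow_add]
    exact sq_eventCov_le (isReversible_pow hκ n) hB
  · calc eventCov (κ ^ n) π B
        = ∫ x in B, (((κ ^ n) x).real B - π.real B) ∂π := by
          rw [integral_sub ((memLp_kernel_real hB 1).integrable le_rfl).integrableOn
            (integrable_const _), setIntegral_const, eventCov,
            compProd_real_prod_eq_setIntegral hB hB, smul_eq_mul, sq]
      _ ≤ ∫ _ in B, K * r ^ n ∂π :=
          setIntegral_mono_on (((memLp_kernel_real hB 1).integrable le_rfl).sub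
            (integrable_const _)).integrableOn (integrable_const _) hB fun x hx => hK x hx n hn
      _ = K * π.real B * r ^ n := by rw [setIntegral_const, smul_eq_mul]; ring

/-- Geometric convergence to `π` at a common rate from every starting point, with total variation
written out as a supremum over events. The prefactor `M` is required to be measurable. -/
def GeometricallyErgodic (κ : Kernel α α) (π : Measure α) : Prop :=
  ∃ r : ℝ, 0 ≤ r ∧ r < 1 ∧ ∃ M : α → ℝ, Measurable M ∧
    ∀ x n, 1 ≤ n → ∀ A, MeasurableSet A → |((κ ^ n) x).real A - π.real A| ≤ M x * r ^ n

lemma tendsto_measureReal_iUnion_atTop {μ : Measure α} [IsFiniteMeasure μ] {S : ℕ → Set α}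
    (hS : Monotone S) :
    Tendsto (fun k => μ.real (S k)) atTop (𝓝 (μ.real (⋃ k, S k))) :=
  (ENNReal.tendsto_toReal (by finiteness)).comp (tendsto_measure_iUnion_atTop hS)

lemma GeometricallyErgodic.exists_eventCov_le [IsProbabilityMeasure π] [IsMarkovKernel κ]
    (h : GeometricallyErgodic κ π) (hκ : κ.IsReversible π) :
    ∃ r < 1, ∀ B, MeasurableSet B → eventCov κ π B ≤ r * (π.real B * π.real Bᶜ) := by
  obtain ⟨r, hr₀, hr₁, M, hM, hconv⟩ := h
  refine ⟨r, hr₁, fun B hB => ?_⟩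
  set S : ℕ → Set α := fun k => B ∩ {x | M x ≤ k}
  have hS_meas (k : ℕ) : MeasurableSet (S k) := hB.inter (measurableSet_le hM measurable_const)
  have hS_mono : Monotone S := fun j k hjk =>
    inter_subset_inter_right B fun x (hx : M x ≤ j) => hx.trans (by exact_mod_cast hjk)
  have hS_iUnion : ⋃ k, S k = B := by
    rw [← inter_iUnion, inter_eq_left]
    exact fun x _ => mem_iUnion.2 (exists_nat_ge (M x))
  have hS_prod : ⋃ k, S k ×ˢ S k = B ×ˢ B := by
    rw [iUnion_prod_of_monotone hS_mono hS_mono, hS_iUnion]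
  have truncated (k : ℕ) :
      (π ⊗ₘ κ).real (S k ×ˢ S k) - π.real (S k) ^ 2 ≤ r * (π.real (S k) * (1 - π.real (S k))) := by
    rw [← probReal_compl_eq_one_sub (hS_meas k)]
    refine eventCov_le_of_forall_pow_real_sub_le (K := k) hκ (hS_meas k) hr₀ fun x hx n hn => ?_
    exact (le_abs_self _).trans ((hconv x n hn _ (hS_meas k)).trans
      (mul_le_mul_of_nonneg_right hx.2 (by positivity)))
  have lim_S := tendsto_measureReal_iUnion_atTop (μ := π) hS_mono
  have lim_prod := tendsto_measureReal_iUnion_atTop (μ := π ⊗ₘ κ)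
    (hS_mono.set_prod hS_mono)
  rw [hS_iUnion] at lim_S
  rw [hS_prod] at lim_prod
  rw [eventCov, probReal_compl_eq_one_sub hB]
  exact le_of_tendsto_of_tendsto' (lim_prod.sub (lim_S.pow 2))
    ((lim_S.mul (lim_S.const_sub 1)).const_mul r) truncated

theorem GeometricallyErgodic.exists_pos_conductance [IsProbabilityMeasure π] [IsMarkovKernel κ]
    (h : GeometricallyErgodic κ π) (hκ : κ.IsReversible π) :
    ∃ ε > 0, ∀ B, MeasurableSet B →
      ε * (π.real B * π.real Bᶜ) ≤ (π ⊗ₘ κ).real (B ×ˢ Bᶜ) := by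
  obtain ⟨r, hr, hcov⟩ := h.exists_eventCov_le hκ
  refine ⟨1 - r, sub_pos.2 hr, fun B hB => ?_⟩
  linarith [hcov B hB, eventCov_add_compProd_real_prod_compl (π := π) (κ := κ) hB]

end Reversible

section Density

variable {α β γ : Type*} [MeasurableSpace α] [MeasurableSpace β] [MeasurableSpace γ]
  {μ : Measure β} {ν : Measure γ}

lemma integral_pos_of_forall_pos [NeZero μ] {f : β → ℝ} (hf : Integrable f μ)
    (hpos : ∀ x, 0 < f x) : 0 < ∫ x, f x ∂μ := by
  rw [integral_pos_iff_support_of_nonneg (fun x => (hpos x).le) hf,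
    Function.support_eq_univ fun x => (hpos x).ne']
  exact NeZero.pos (μ univ)

/-- Being a probability density with respect to `μ`. -/
structure IsProbDensity (μ : Measure β) (f : β → ℝ) : Prop where
  measurable : Measurable f
  nonneg : ∀ x, 0 ≤ f x
  integral_eq_one : ∫ x, f x ∂μ = 1

/-- The measure with real-valued density `f` with respect to `μ`. -/
def densityMeasure (μ : Measure β) (f : β → ℝ) : Measure β :=
  μ.withDensity fun x => ENNReal.ofReal (f x)

/-- Being the density, with respect to `μ` and jointly measurable in both variables, of a Markov
kernel from `α` to `β`. -/
structure IsTransitionDensity (μ : Measure β) (p : α → β → ℝ) : Prop where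
  measurable : Measurable (Function.uncurry p)
  isProbDensity : ∀ x, IsProbDensity μ (p x)

/-- The kernel with transition density `p` with respect to `μ`. -/
def densityKernel (μ : Measure β) [SFinite μ] (p : α → β → ℝ) : Kernel α β :=
  (Kernel.const α μ).withDensity fun x y => ENNReal.ofReal (p x y)

/-- The Chapman–Kolmogorov composition: the density of a step by `p` followed by a step by `q`. -/
def compDensity (μ : Measure β) (p : α → β → ℝ) (q : β → γ → ℝ) (x : α) (z : γ) : ℝ :=
  ∫ y, p x y * q y z ∂μ

namespace IsProbDensity

variable {f g : β → ℝ} {A : Set β}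

lemma integrable (hf : IsProbDensity μ f) : Integrable f μ :=
  .of_integral_ne_zero (hf.integral_eq_one.trans_ne one_ne_zero)

lemma isProbabilityMeasure (hf : IsProbDensity μ f) :
    IsProbabilityMeasure (densityMeasure μ f) := by
  constructor
  rw [densityMeasure, withDensity_apply _ .univ, Measure.restrict_univ,
    ← ofReal_integral_eq_lintegral_ofReal hf.integrable (.of_forall hf.nonneg),
    hf.integral_eq_one, ENNReal.ofReal_one]

lemma densityMeasure_real (hf : IsProbDensity μ f) (hA : MeasurableSet A) :
    (densityMeasure μ f).real A = ∫ x in A, f x ∂μ := by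
  rw [measureReal_def, densityMeasure, withDensity_apply _ hA,
    ← ofReal_integral_eq_lintegral_ofReal hf.integrable.restrict (.of_forall hf.nonneg),
    ENNReal.toReal_ofReal (integral_nonneg hf.nonneg)]

lemma integral_densityMeasure (hf : IsProbDensity μ f) (φ : β → ℝ) :
    ∫ x, φ x ∂densityMeasure μ f = ∫ x, f x * φ x ∂μ := by
  rw [densityMeasure, integral_withDensity_eq_integral_toReal_smul
    hf.measurable.ennreal_ofReal (.of_forall fun x => ENNReal.ofReal_lt_top)]
  simp only [ENNReal.toReal_ofReal (hf.nonneg _), smul_eq_mul]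

lemma abs_densityMeasure_real_sub_le (hf : IsProbDensity μ f) (hg : IsProbDensity μ g)
    (hA : MeasurableSet A) :
    |(densityMeasure μ f).real A - (densityMeasure μ g).real A| ≤ ∫ x, |f x - g x| ∂μ := by
  rw [hf.densityMeasure_real hA, hg.densityMeasure_real hA,
    ← integral_sub hf.integrable.integrableOn hg.integrable.integrableOn]
  exact abs_integral_le_integral_abs.trans (setIntegral_le_integral
    (hf.integrable.sub hg.integrable).abs (.of_forall fun x => abs_nonneg _))

end IsProbDensity

namespace IsTransitionDensity

variable {p : α → β → ℝ} {q : β → γ → ℝ}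

lemma densityKernel_apply [SFinite μ] (hp : IsTransitionDensity μ p) (x : α) :
    densityKernel μ p x = densityMeasure μ (p x) :=
  Kernel.withDensity_apply _ hp.measurable.ennreal_ofReal x

lemma isMarkovKernel [SFinite μ] (hp : IsTransitionDensity μ p) :
    IsMarkovKernel (densityKernel μ p) :=
  ⟨fun x => hp.densityKernel_apply x ▸ (hp.isProbDensity x).isProbabilityMeasure⟩

lemma integrable_mul_prod [SFinite ν] (hp : IsTransitionDensity μ p)
    (hq : IsTransitionDensity ν q) (x : α) :
    Integrable (fun yz : β × γ => p x yz.1 * q yz.1 yz.2) (μ.prod ν) := by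
  have hmeas : Measurable fun yz : β × γ => p x yz.1 * q yz.1 yz.2 :=
    ((hp.isProbDensity x).measurable.comp measurable_fst).mul hq.measurable
  rw [integrable_prod_iff hmeas.aestronglyMeasurable]
  refine ⟨.of_forall fun y => (hq.isProbDensity y).integrable.const_mul (p x y), ?_⟩
  convert (hp.isProbDensity x).integrable using 2 with y
  simp only [norm_mul, Real.norm_of_nonneg ((hp.isProbDensity x).nonneg y),
    Real.norm_of_nonneg ((hq.isProbDensity y).nonneg _), integral_const_mul,
    (hq.isProbDensity y).integral_eq_one, mul_one]

lemma measurable_compDensity [SFinite μ] (hp : IsTransitionDensity μ p)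
    (hq : IsTransitionDensity ν q) : Measurable (Function.uncurry (compDensity μ p q)) := by
  have : Measurable fun w : (α × γ) × β => p w.1.1 w.2 * q w.2 w.1.2 :=
    (hp.measurable.comp (measurable_fst.fst.prodMk measurable_snd)).mul
      (hq.measurable.comp (measurable_snd.prodMk measurable_fst.snd))
  exact this.stronglyMeasurable.integral_prod_right.measurable

lemma comp [SFinite μ] [SFinite ν] (hp : IsTransitionDensity μ p)
    (hq : IsTransitionDensity ν q) : IsTransitionDensity ν (compDensity μ p q) where
  measurable := hp.measurable_compDensity hq
  isProbDensity x :=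
    { measurable := (hp.measurable_compDensity hq).of_uncurry_left
      nonneg z := integral_nonneg fun y =>
        mul_nonneg ((hp.isProbDensity x).nonneg y) ((hq.isProbDensity y).nonneg z)
      integral_eq_one := by
        calc ∫ z, ∫ y, p x y * q y z ∂μ ∂ν
            = ∫ y, ∫ z, p x y * q y z ∂ν ∂μ :=
              (integral_integral_swap (hp.integrable_mul_prod hq x)).symm
          _ = 1 := by
              simp only [integral_const_mul, (hq.isProbDensity _).integral_eq_one, mul_one,
                (hp.isProbDensity x).integral_eq_one] }

lemma densityKernel_compDensity [SFinite μ] [SFinite ν] (hp : IsTransitionDensity μ p)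
    (hq : IsTransitionDensity ν q) :
    densityKernel ν (compDensity μ p q) = densityKernel ν q ∘ₖ densityKernel μ p := by
  ext x A hA
  have hp_meas : Measurable fun y => ENNReal.ofReal (p x y) :=
    (hp.isProbDensity x).measurable.ennreal_ofReal
  have ofReal_comp : ∀ᵐ z ∂ν, ENNReal.ofReal (compDensity μ p q x z)
      = ∫⁻ y, ENNReal.ofReal (p x y) * ENNReal.ofReal (q y z) ∂μ := by
    filter_upwards [(hp.integrable_mul_prod hq x).prod_left_ae] with z hz
    simp only [← ENNReal.ofReal_mul ((hp.isProbDensity x).nonneg _)]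
    exact ofReal_integral_eq_lintegral_ofReal hz (.of_forall fun y =>
      mul_nonneg ((hp.isProbDensity x).nonneg y) ((hq.isProbDensity y).nonneg z))
  rw [(hp.comp hq).densityKernel_apply, densityMeasure, withDensity_apply _ hA,
    Kernel.comp_apply' _ _ _ hA, hp.densityKernel_apply, densityMeasure,
    lintegral_withDensity_eq_lintegral_mul _ hp_meas (Kernel.measurable_coe _ hA),
    setLIntegral_congr_fun_ae hA (ofReal_comp.mono fun z hz _ => hz), lintegral_lintegral_swap]
  · refine lintegral_congr fun y => ?_
    rw [lintegral_const_mul _ (hq.isProbDensity y).measurable.ennreal_ofReal, Pi.mul_apply,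
      hq.densityKernel_apply, densityMeasure, withDensity_apply _ hA]
  · have : Measurable fun w : γ × β => ENNReal.ofReal (p x w.2) * ENNReal.ofReal (q w.2 w.1) :=
      (hp_meas.comp measurable_snd).mul (hq.measurable.ennreal_ofReal.comp measurable_swap)
    exact this.aemeasurable

lemma isReversible_of_detailed_balance {μ : Measure α} [SFinite μ] {p : α → α → ℝ} {w : α → ℝ}
    (hp : IsTransitionDensity μ p) (hw : IsProbDensity μ w)
    (balance : ∀ x y, w x * p x y = w y * p y x) :
    (densityKernel μ p).IsReversible (densityMeasure μ w) := by
  have flow {A B : Set α} (hA : MeasurableSet A) (hB : MeasurableSet B) :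
      ∫⁻ x in A, densityKernel μ p x B ∂densityMeasure μ w
        = ∫⁻ x in A, ∫⁻ y in B, ENNReal.ofReal (w x * p x y) ∂μ ∂μ := by
    rw [densityMeasure, setLIntegral_withDensity_eq_setLIntegral_mul _
      hw.measurable.ennreal_ofReal (Kernel.measurable_coe _ hB) hA]
    refine lintegral_congr fun x => ?_
    simp only [ENNReal.ofReal_mul (hw.nonneg x), Pi.mul_apply, hp.densityKernel_apply,
      densityMeasure, withDensity_apply _ hB]
    rw [lintegral_const_mul _ (hp.isProbDensity x).measurable.ennreal_ofReal]
  intro A B hA hB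
  rw [flow hA hB, flow hB hA, lintegral_lintegral_swap]
  · simp only [balance]
  · have : Measurable fun z : α × α => ENNReal.ofReal (w z.1 * p z.1 z.2) :=
      ((hw.measurable.comp measurable_fst).mul hp.measurable).ennreal_ofReal
    exact this.aemeasurable

end IsTransitionDensity

lemma exists_measurable_geometric_bound {D : ℕ → α → ℝ} (hD : ∀ n, 1 ≤ n → Measurable (D n)) {r : ℝ}
    (hr : 0 ≤ r) {M : α → ℝ} (hM : ∀ x n, 1 ≤ n → D n x ≤ M x * r ^ n) :
    ∃ M' : α → ℝ, Measurable M' ∧ ∀ x n, 1 ≤ n → D n x ≤ M' x * r ^ n := by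
  obtain rfl | hr := hr.eq_or_lt
  · refine ⟨0, measurable_const, fun x n hn => (hM x n hn).trans_eq ?_⟩
    simp [Nat.one_le_iff_ne_zero.1 hn]
  refine ⟨fun x => ⨆ n, D (n + 1) x / r ^ (n + 1),
    .iSup fun n => (hD _ n.succ_pos).div_const _, fun x n hn => ?_⟩
  obtain ⟨n, rfl⟩ := Nat.exists_eq_add_of_le' hn
  have hbdd : BddAbove (range fun n => D (n + 1) x / r ^ (n + 1)) :=
    ⟨M x, forall_mem_range.2 fun n => (div_le_iff₀ (by positivity)).2 (hM x _ (by omega))⟩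
  exact (div_le_iff₀ (by positivity)).1 (le_ciSup hbdd n)

lemma geometricallyErgodic_of_integral_abs_sub_le {μ : Measure α} [SFinite μ] {κ : Kernel α α}
    {P : ℕ → α → α → ℝ} {w : α → ℝ} (hP : ∀ n, 1 ≤ n → IsTransitionDensity μ (P n))
    (hκ : ∀ n, 1 ≤ n → κ ^ n = densityKernel μ (P n)) (hw : IsProbDensity μ w) {r : ℝ}
    (hr₀ : 0 ≤ r) (hr₁ : r < 1) {M : α → ℝ}
    (hM : ∀ x n, 1 ≤ n → ∫ y, |P n x y - w y| ∂μ ≤ M x * r ^ n) :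
    GeometricallyErgodic κ (densityMeasure μ w) := by
  have measurable_distance (n : ℕ) (hn : 1 ≤ n) :
      Measurable fun x => ∫ y, |P n x y - w y| ∂μ := by
    have : Measurable fun z : α × α => |P n z.1 z.2 - w z.2| :=
      ((hP n hn).measurable.sub (hw.measurable.comp measurable_snd)).norm
    exact this.stronglyMeasurable.integral_prod_right.measurable
  obtain ⟨M', hM'_meas, hM'⟩ := exists_measurable_geometric_bound
    (D := fun n x => ∫ y, |P n x y - w y| ∂μ) measurable_distance hr₀ hM
  refine ⟨r, hr₀, hr₁, M', hM'_meas, fun x n hn A hA => ?_⟩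
  rw [hκ n hn, (hP n hn).densityKernel_apply]
  exact (((hP n hn).isProbDensity x).abs_densityMeasure_real_sub_le hw hA).trans (hM' x n hn)

end Density

section RealLine

lemma IsProbDensity.comp_const_add {f : ℝ → ℝ} (hf : IsProbDensity volume f) (θ : ℝ) :
    IsProbDensity volume fun h => f (θ + h) where
  measurable := hf.measurable.comp (measurable_const_add θ)
  nonneg h := hf.nonneg (θ + h)
  integral_eq_one := (integral_add_left_eq_self f θ).trans hf.integral_eq_one

lemma IsProbDensity.densityMeasure_comp_const_add_real {f : ℝ → ℝ} (hf : IsProbDensity volume f)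
    (θ : ℝ) {A : Set ℝ} (hA : MeasurableSet A) :
    (densityMeasure volume fun h => f (θ + h)).real ((θ + ·) ⁻¹' A)
      = (densityMeasure volume f).real A := by
  rw [(hf.comp_const_add θ).densityMeasure_real (hA.preimage (measurable_const_add θ)),
    hf.densityMeasure_real hA]
  exact (measurePreserving_add_left volume θ).setIntegral_preimage_emb
    (measurableEmbedding_addLeft θ) f A

lemma eventually_lt_densityMeasure_real_of_tendsto {ι β : Type*} [MeasurableSpace β]
    {μ : Measure β} {l : Filter ι} [l.IsCountablyGenerated] {f : ι → β → ℝ} {g : β → ℝ}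
    (hf : ∀ i, IsProbDensity μ (f i)) (hg : IsProbDensity μ g)
    (hlim : ∀ x, Tendsto (f · x) l (𝓝 (g x))) {A : Set β} (hA : MeasurableSet A) {c : ℝ}
    (hc : c < (densityMeasure μ g).real A) : ∀ᶠ i in l, c < (densityMeasure μ (f i)).real A := by
  have := hg.isProbabilityMeasure
  obtain hc_neg | hc_nonneg := lt_or_ge c 0
  · exact .of_forall fun i => hc_neg.trans_le measureReal_nonneg
  have fatou : densityMeasure μ g A ≤ liminf (fun i => densityMeasure μ (f i) A) l := by
    simp only [densityMeasure, withDensity_apply _ hA]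
    obtain rfl | hl := l.eq_or_neBot
    · simp [liminf_eq]
    calc ∫⁻ x in A, ENNReal.ofReal (g x) ∂μ
        = ∫⁻ x in A, liminf (fun i => ENNReal.ofReal (f i x)) l ∂μ :=
          lintegral_congr fun x => (ENNReal.tendsto_ofReal (hlim x)).liminf_eq.symm
      _ ≤ liminf (fun i => ∫⁻ x in A, ENNReal.ofReal (f i x) ∂μ) l :=
          lintegral_liminf_le fun i => (hf i).measurable.ennreal_ofReal
  have hc_lt := (ENNReal.ofReal_lt_iff_lt_toReal hc_nonneg (measure_ne_top _ A)).2 hc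
  filter_upwards [eventually_lt_of_lt_liminf (hc_lt.trans_le fatou)] with i hi
  have := (hf i).isProbabilityMeasure
  exact (ENNReal.ofReal_lt_iff_lt_toReal hc_nonneg (measure_ne_top _ A)).1 hi

/-- The jumps to the left made from far out on the right are tight. -/
def HasTightLeftJumps (κ : Kernel ℝ ℝ) : Prop :=
  ∀ ε > 0, ∃ H : ℝ, ∀ᶠ θ in atTop, (κ θ).real (Iic (θ - H)) ≤ ε

/-- The right tail of `π` is long: windows of a fixed width carry a vanishing share of it. -/
def LongTailed (π : Measure ℝ) : Prop :=
  ∀ H : ℝ, ∀ ε > 0, ∀ᶠ T in atTop, π.real (Ioc T (T + H)) ≤ ε * π.real (Ioi T)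

lemma compProd_real_Ioi_prod_Iic_le {κ : Kernel ℝ ℝ} {π : Measure ℝ} [IsFiniteMeasure π]
    [IsMarkovKernel κ] {T H ε : ℝ} (hε : 0 ≤ ε)
    (hκ : ∀ θ, T ≤ θ → (κ θ).real (Iic (θ - H)) ≤ ε) :
    (π ⊗ₘ κ).real (Ioi T ×ˢ Iic T) ≤ π.real (Ioc T (T + H)) + ε * π.real (Ioi T) := by
  have pointwise (θ : ℝ) (hθ : T < θ) :
      (κ θ).real (Iic T) ≤ (Iic (T + H)).indicator 1 θ + ε := by
    by_cases hnear : θ ∈ Iic (T + H)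
    · rw [indicator_of_mem hnear]
      exact measureReal_le_one.trans (le_add_of_nonneg_right hε)
    · rw [indicator_of_notMem hnear, zero_add]
      rw [mem_Iic, not_le] at hnear
      exact (measureReal_mono (Iic_subset_Iic.2 (by linarith))).trans (hκ θ hθ.le)
  have integrable_indicator : Integrable ((Iic (T + H)).indicator (1 : ℝ → ℝ)) π :=
    (integrable_const 1).indicator measurableSet_Iic
  rw [compProd_real_prod_eq_setIntegral measurableSet_Ioi measurableSet_Iic]
  calc ∫ θ in Ioi T, (κ θ).real (Iic T) ∂π
      ≤ ∫ θ in Ioi T, ((Iic (T + H)).indicator 1 θ + ε) ∂π :=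
        setIntegral_mono_on ((memLp_kernel_real measurableSet_Iic 1).integrable le_rfl).integrableOn
          (integrable_indicator.add (integrable_const ε)).integrableOn measurableSet_Ioi pointwise
    _ = π.real (Ioc T (T + H)) + ε * π.real (Ioi T) := by
        rw [integral_add integrable_indicator.integrableOn (integrable_const ε),
          integral_indicator_one measurableSet_Iic, setIntegral_const,
          measureReal_restrict_apply measurableSet_Iic, inter_comm, Ioi_inter_Iic, smul_eq_mul,
          mul_comm ε]

theorem not_geometricallyErgodic_of_longTailed {κ : Kernel ℝ ℝ} {π : Measure ℝ}
    [IsProbabilityMeasure π] [IsMarkovKernel κ] (hκ : κ.IsReversible π)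
    (hjumps : HasTightLeftJumps κ) (htail : LongTailed π) (hpos : ∀ T, 0 < π.real (Ioi T)) :
    ¬ GeometricallyErgodic κ π := by
  intro hergodic
  obtain ⟨ε, hε, hflow⟩ := hergodic.exists_pos_conductance hκ
  obtain ⟨H, hH⟩ := hjumps (ε / 8) (by positivity)
  have left_mass : ∀ᶠ T in atTop, 1 / 2 < π.real (Iic T) := by
    simp only [← cdf_eq_real]
    exact (tendsto_cdf_atTop π).eventually_const_lt one_half_lt_one
  obtain ⟨T, hT_jumps, hT_tail, hT_left⟩ :=
    ((eventually_forall_ge_atTop.2 hH).and ((htail H (ε / 8) (by positivity)).and left_mass)).exists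
  have upper := compProd_real_Ioi_prod_Iic_le (π := π) (by positivity) hT_jumps
  have lower := hflow (Ioi T) measurableSet_Ioi
  rw [compl_Ioi] at lower
  have : ε * (π.real (Ioi T) * (1 / 2)) ≤ ε * (π.real (Ioi T) * π.real (Iic T)) := by gcongr
  nlinarith [mul_pos hε (hpos T)]

variable {p : ℝ → ℝ → ℝ} {q w : ℝ → ℝ}

lemma hasTightLeftJumps_densityKernel (hp : IsTransitionDensity volume p)
    (hq : IsProbDensity volume q)
    (hlim : ∀ h, Tendsto (fun θ => p θ (θ + h)) atTop (𝓝 (q h))) :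
    HasTightLeftJumps (densityKernel volume p) := by
  intro ε hε
  have := hp.isMarkovKernel
  have := hq.isProbabilityMeasure
  obtain ⟨a, ha⟩ : ∃ a, 1 - ε < (densityMeasure volume q).real (Ioi a) := by
    obtain ⟨a, ha⟩ := ((tendsto_cdf_atBot (densityMeasure volume q)).eventually_lt_const hε).exists
    refine ⟨a, ?_⟩
    rw [← compl_Iic, probReal_compl_eq_one_sub measurableSet_Iic, ← cdf_eq_real]
    linarith
  refine ⟨-a, ?_⟩
  filter_upwards [eventually_lt_densityMeasure_real_of_tendsto
    (fun θ => (hp.isProbDensity θ).comp_const_add θ) hq hlim measurableSet_Ioi ha] with θ hθ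
  have shift := (hp.isProbDensity θ).densityMeasure_comp_const_add_real θ
    (measurableSet_Ioi (a := θ + a))
  rw [preimage_const_add_Ioi, add_sub_cancel_left, ← hp.densityKernel_apply] at shift
  rw [sub_neg_eq_add, ← compl_Ioi, probReal_compl_eq_one_sub measurableSet_Ioi]
  linarith

lemma densityMeasure_real_Ioi_pos (hw : IsProbDensity volume w) (hw_pos : ∀ θ, 0 < w θ) (T : ℝ) :
    0 < (densityMeasure volume w).real (Ioi T) := by
  have : NeZero (volume.restrict (Ioi T)) := ⟨by simp⟩
  rw [hw.densityMeasure_real measurableSet_Ioi]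
  exact integral_pos_of_forall_pos hw.integrable.integrableOn hw_pos

lemma longTailed_densityMeasure (hw : IsProbDensity volume w) (hw_pos : ∀ θ, 0 < w θ)
    (hratio : ∀ h, Tendsto (fun θ => w θ / w (θ + h)) atTop (𝓝 1)) :
    LongTailed (densityMeasure volume w) := by
  intro H ε hε
  have := hw.isProbabilityMeasure
  obtain hH | hH := lt_or_ge H 0
  · refine .of_forall fun T => ?_
    rw [Ioc_eq_empty (by linarith), measureReal_empty]
    positivity
  have w_le : ∀ᶠ θ in atTop, w θ ≤ (1 + ε) * w (H + θ) := by
    filter_upwards [(hratio H).eventually_lt_const (show 1 < 1 + ε by linarith)] with θ hθ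
    rw [add_comm H]
    exact ((div_lt_iff₀ (hw_pos _)).1 hθ).le
  filter_upwards [eventually_forall_ge_atTop.2 w_le] with T hT
  have shift := hw.densityMeasure_comp_const_add_real H (measurableSet_Ioi (a := T + H))
  rw [preimage_const_add_Ioi, add_sub_cancel_right] at shift
  have tail_le : (densityMeasure volume w).real (Ioi T)
      ≤ (1 + ε) * (densityMeasure volume w).real (Ioi (T + H)) := by
    rw [← shift, hw.densityMeasure_real measurableSet_Ioi,
      (hw.comp_const_add H).densityMeasure_real measurableSet_Ioi, ← integral_const_mul]
    exact setIntegral_mono_on hw.integrable.integrableOn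
      ((hw.comp_const_add H).integrable.const_mul _).integrableOn measurableSet_Ioi
      fun θ hθ => hT θ (le_of_lt hθ)
  have split : (densityMeasure volume w).real (Ioc T (T + H))
      + (densityMeasure volume w).real (Ioi (T + H)) = (densityMeasure volume w).real (Ioi T) := by
    rw [← measureReal_union (Ioc_disjoint_Ioi le_rfl) measurableSet_Ioi,
      Ioc_union_Ioi_eq_Ioi (by linarith)]
  have mono : (densityMeasure volume w).real (Ioi (T + H))
      ≤ (densityMeasure volume w).real (Ioi T) :=
    measureReal_mono (Ioi_subset_Ioi (by linarith))
  nlinarith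

lemma tendsto_div_of_detailed_balance (hw_pos : ∀ θ, 0 < w θ)
    (balance : ∀ x y, w x * p x y = w y * p y x) (hq_pos : ∀ h, 0 < q h)
    (hq_even : ∀ h, q (-h) = q h)
    (hlim : ∀ h, Tendsto (fun θ => p θ (θ + h)) atTop (𝓝 (q h))) (h : ℝ) :
    Tendsto (fun θ => w θ / w (θ + h)) atTop (𝓝 1) := by
  have back : Tendsto (fun θ => p (θ + h) θ) atTop (𝓝 (q h)) := by
    simpa [hq_even, Function.comp_def] using
      (hlim (-h)).comp (tendsto_atTop_add_const_right _ h tendsto_id)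
  have ratio := back.div (hlim h) (hq_pos h).ne'
  rw [div_self (hq_pos h).ne'] at ratio
  refine ratio.congr' ?_
  filter_upwards [(hlim h).eventually_ne (hq_pos h).ne'] with θ hθ
  rw [Pi.div_apply, div_eq_div_iff hθ (hw_pos _).ne', balance θ, mul_comm]

theorem not_geometricallyErgodic_of_tendsto_even_increments (hp : IsTransitionDensity volume p)
    (hw : IsProbDensity volume w) (hw_pos : ∀ θ, 0 < w θ)
    (balance : ∀ x y, w x * p x y = w y * p y x) (hq : IsProbDensity volume q)
    (hq_pos : ∀ h, 0 < q h) (hq_even : ∀ h, q (-h) = q h)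
    (hlim : ∀ h, Tendsto (fun θ => p θ (θ + h)) atTop (𝓝 (q h))) :
    ¬ GeometricallyErgodic (densityKernel volume p) (densityMeasure volume w) :=
  have := hp.isMarkovKernel
  have := hw.isProbabilityMeasure
  not_geometricallyErgodic_of_longTailed (hp.isReversible_of_detailed_balance hw balance)
    (hasTightLeftJumps_densityKernel hp hq hlim)
    (longTailed_densityMeasure hw hw_pos
      (tendsto_div_of_detailed_balance hw_pos balance hq_pos hq_even hlim))
    (densityMeasure_real_Ioi_pos hw hw_pos)

end RealLine

section WeakConvergence

variable {ι : Type*} {l : Filter ι} [l.IsCountablyGenerated]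

lemma tendsto_probabilityMeasure_of_tendsto_Iic {μ : ι → ProbabilityMeasure ℝ}
    {ν : ProbabilityMeasure ℝ}
    (h : ∀ z, Tendsto (fun i => (μ i : Measure ℝ).real (Iic z)) l
      (𝓝 ((ν : Measure ℝ).real (Iic z)))) : Tendsto μ l (𝓝 ν) := by
  refine (isPiSystem_Ioc (id : ℝ → ℝ) id).tendsto_probabilityMeasure_of_tendsto_of_mem ?_ ?_ ?_
  · rintro _ ⟨a, b, -, rfl⟩
    exact measurableSet_Ioc
  · intro u hu x hx
    obtain ⟨ε, hε, hball⟩ := Metric.nhds_basis_closedBall.mem_iff.1 (hu.mem_nhds hx)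
    rw [Real.closedBall_eq_Icc] at hball
    exact ⟨Ioc (x - ε) (x + ε), ⟨_, _, by dsimp only [id]; linarith, rfl⟩,
      Ioc_mem_nhds (by linarith) (by linarith), Ioc_subset_Icc_self.trans hball⟩
  · rintro _ ⟨a, b, hab : a < b, rfl⟩
    dsimp only [id]
    have real_Ioc (ρ : Measure ℝ) [IsProbabilityMeasure ρ] :
        ρ.real (Ioc a b) = ρ.real (Iic b) - ρ.real (Iic a) := by
      rw [← Ioi_inter_Iic, inter_comm, ← sdiff_compl, compl_Ioi,
        measureReal_sdiff (Iic_subset_Iic.2 hab.le) measurableSet_Iic]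
    rw [← NNReal.tendsto_coe]
    change Tendsto (fun i => (μ i : Measure ℝ).real (Ioc a b)) l
      (𝓝 ((ν : Measure ℝ).real (Ioc a b)))
    simp only [real_Ioc]
    exact (h b).sub (h a)

lemma tendsto_integral_mul_of_tendsto_setIntegral_Iic {f : ι → ℝ → ℝ} {g : ℝ → ℝ}
    (hf : ∀ i, IsProbDensity volume (f i)) (hg : IsProbDensity volume g)
    (h : ∀ z, Tendsto (fun i => ∫ x in Iic z, f i x) l (𝓝 (∫ x in Iic z, g x)))
    (φ : BoundedContinuousFunction ℝ ℝ) :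
    Tendsto (fun i => ∫ x, f i x * φ x) l (𝓝 (∫ x, g x * φ x)) := by
  let μ (i : ι) : ProbabilityMeasure ℝ := ⟨densityMeasure volume (f i), (hf i).isProbabilityMeasure⟩
  let ν : ProbabilityMeasure ℝ := ⟨densityMeasure volume g, hg.isProbabilityMeasure⟩
  have weak : Tendsto μ l (𝓝 ν) := by
    refine tendsto_probabilityMeasure_of_tendsto_Iic fun z => ?_
    simp only [μ, ν, ProbabilityMeasure.coe_mk, (hf _).densityMeasure_real measurableSet_Iic,
      hg.densityMeasure_real measurableSet_Iic]
    exact h z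
  simpa only [μ, ν, ProbabilityMeasure.coe_mk, (hf _).integral_densityMeasure,
    hg.integral_densityMeasure] using
    ProbabilityMeasure.tendsto_iff_forall_integral_tendsto.1 weak φ

end WeakConvergence

section DifferenceDensity

variable {f : ℝ → ℝ}

/-- The density of `Z - Z'` for independent `Z` and `Z'` of density `f`. -/
def differenceDensity (f : ℝ → ℝ) (h : ℝ) : ℝ := ∫ s, f s * f (s - h)

lemma IsProbDensity.isTransitionDensity_sub (hf : IsProbDensity volume f) :
    IsTransitionDensity volume fun x z => f (x - z) where
  measurable := hf.measurable.comp measurable_sub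
  isProbDensity x :=
    { measurable := hf.measurable.comp (measurable_const_sub x)
      nonneg z := hf.nonneg (x - z)
      integral_eq_one := (integral_sub_left_eq_self f volume x).trans hf.integral_eq_one }

lemma IsProbDensity.differenceDensity (hf : IsProbDensity volume f) :
    IsProbDensity volume (differenceDensity f) :=
  have start : IsTransitionDensity volume fun (_ : Unit) s => f s :=
    ⟨hf.measurable.comp measurable_snd, fun _ => hf⟩
  (start.comp hf.isTransitionDensity_sub).isProbDensity ()

lemma differenceDensity_neg (f : ℝ → ℝ) (h : ℝ) :
    differenceDensity f (-h) = differenceDensity f h := by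
  calc ∫ s, f s * f (s - -h)
      = ∫ s, f (s - h) * f (s - h - -h) :=
        (integral_sub_right_eq_self (fun s => f s * f (s - -h)) h).symm
    _ = ∫ s, f s * f (s - h) := by simp only [sub_neg_eq_add, sub_add_cancel, mul_comm]

lemma differenceDensity_pos (hf : IsProbDensity volume f) (hf_pos : ∀ t, 0 < f t)
    (hf_bdd : ∃ M, ∀ t, f t ≤ M) (h : ℝ) : 0 < differenceDensity f h := by
  obtain ⟨M, hM⟩ := hf_bdd
  have hint : Integrable fun s => f s * f (s - h) :=
    hf.integrable.mul_bdd (c := M)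
      (hf.measurable.comp (measurable_sub_const h)).aestronglyMeasurable
      (.of_forall fun s => by rw [Real.norm_of_nonneg (hf.nonneg _)]; exact hM _)
  exact integral_pos_of_forall_pos hint fun s => mul_pos (hf_pos s) (hf_pos (s - h))

end DifferenceDensity

section Gibbs

variable {f₁ f₂ : ℝ → ℝ} {y : ℝ}

lemma fjoint_nonneg (hf₁ : ∀ t, 0 ≤ f₁ t) (hf₂ : ∀ t, 0 ≤ f₂ t) (θ x : ℝ) :
    0 ≤ fjoint f₁ f₂ y θ x := mul_nonneg (hf₁ _) (hf₂ _)

lemma measurable_uncurry_fjoint (hf₁ : Measurable f₁) (hf₂ : Measurable f₂) :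
    Measurable (Function.uncurry (fjoint f₁ f₂ y)) :=
  (hf₁.comp (measurable_snd.const_sub y)).mul (hf₂.comp (measurable_snd.sub measurable_fst))

lemma measurable_cnorm (hf₁ : Measurable f₁) (hf₂ : Measurable f₂) :
    Measurable (cnorm f₁ f₂ y) :=
  (measurable_uncurry_fjoint hf₁ hf₂).stronglyMeasurable.integral_prod_right.measurable

lemma isTransitionDensity_post (hf₁ : Measurable f₁) (hf₁_nonneg : ∀ t, 0 ≤ f₁ t)
    (hf₂ : Measurable f₂) (hf₂_nonneg : ∀ t, 0 ≤ f₂ t) (hc : ∀ θ, 0 < cnorm f₁ f₂ y θ) :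
    IsTransitionDensity volume (post f₁ f₂ y) := by
  have hmeas : Measurable (Function.uncurry (post f₁ f₂ y)) :=
    (measurable_uncurry_fjoint hf₁ hf₂).div ((measurable_cnorm hf₁ hf₂).comp measurable_fst)
  exact ⟨hmeas, fun θ =>
    { measurable := hmeas.of_uncurry_left
      nonneg x := div_nonneg (fjoint_nonneg hf₁_nonneg hf₂_nonneg θ x) (hc θ).le
      integral_eq_one := (integral_div _ _).trans (div_self (hc θ).ne') }⟩

lemma gibbsTrans_eq_compDensity :
    gibbsTrans f₁ f₂ y = compDensity volume (post f₁ f₂ y) fun x θ => f₂ (x - θ) := by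
  ext θ₀ θ₁
  rw [gibbsTrans, compDensity, ← integral_const_mul]
  congr with x
  rw [post]
  ring

lemma cnorm_mul_gibbsTrans_comm (hc : ∀ θ, cnorm f₁ f₂ y θ ≠ 0) (θ₀ θ₁ : ℝ) :
    cnorm f₁ f₂ y θ₀ * gibbsTrans f₁ f₂ y θ₀ θ₁
      = cnorm f₁ f₂ y θ₁ * gibbsTrans f₁ f₂ y θ₁ θ₀ := by
  rw [gibbsTrans, gibbsTrans, ← mul_assoc, ← mul_assoc, mul_one_div_cancel (hc θ₀),
    mul_one_div_cancel (hc θ₁)]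
  congr with x
  rw [fjoint, fjoint]
  ring

/-- The density `θ ↦ c_θ / C` of the marginal posterior `Π` of `Θ`. -/
def stationaryDensity (f₁ f₂ : ℝ → ℝ) (y θ : ℝ) : ℝ :=
  cnorm f₁ f₂ y θ / ∫ θ', cnorm f₁ f₂ y θ'

lemma stationaryDensity_pos (hc : ∀ θ, 0 < cnorm f₁ f₂ y θ) (hC : Integrable (cnorm f₁ f₂ y))
    (θ : ℝ) : 0 < stationaryDensity f₁ f₂ y θ :=
  div_pos (hc θ) (integral_pos_of_forall_pos hC hc)

lemma isProbDensity_stationaryDensity (hf₁ : Measurable f₁) (hf₂ : Measurable f₂)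
    (hc : ∀ θ, 0 < cnorm f₁ f₂ y θ) (hC : Integrable (cnorm f₁ f₂ y)) :
    IsProbDensity volume (stationaryDensity f₁ f₂ y) where
  measurable := (measurable_cnorm hf₁ hf₂).div_const _
  nonneg θ := (stationaryDensity_pos hc hC θ).le
  integral_eq_one :=
    (integral_div _ _).trans (div_self (integral_pos_of_forall_pos hC hc).ne')

lemma stationaryDensity_mul_gibbsTrans_comm (hc : ∀ θ, cnorm f₁ f₂ y θ ≠ 0) (θ₀ θ₁ : ℝ) :
    stationaryDensity f₁ f₂ y θ₀ * gibbsTrans f₁ f₂ y θ₀ θ₁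
      = stationaryDensity f₁ f₂ y θ₁ * gibbsTrans f₁ f₂ y θ₁ θ₀ := by
  rw [stationaryDensity, stationaryDensity, div_mul_eq_mul_div, div_mul_eq_mul_div,
    cnorm_mul_gibbsTrans_comm hc]

lemma gibbsTransN_succ {n : ℕ} (hn : 1 ≤ n) :
    gibbsTransN f₁ f₂ y (n + 1)
      = compDensity volume (gibbsTransN f₁ f₂ y n) (gibbsTrans f₁ f₂ y) := by
  obtain ⟨n, rfl⟩ := Nat.exists_eq_add_of_le' hn
  rfl

lemma isTransitionDensity_gibbsTransN (hP : IsTransitionDensity volume (gibbsTrans f₁ f₂ y))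
    {n : ℕ} (hn : 1 ≤ n) : IsTransitionDensity volume (gibbsTransN f₁ f₂ y n) := by
  induction n, hn using Nat.le_induction with
  | base => exact hP
  | succ n hn ih => exact gibbsTransN_succ (f₁ := f₁) hn ▸ ih.comp hP

lemma densityKernel_gibbsTrans_pow (hP : IsTransitionDensity volume (gibbsTrans f₁ f₂ y))
    {n : ℕ} (hn : 1 ≤ n) :
    densityKernel volume (gibbsTrans f₁ f₂ y) ^ n
      = densityKernel volume (gibbsTransN f₁ f₂ y n) := by
  induction n, hn using Nat.le_induction with
  | base => exact pow_one _
  | succ n hn ih =>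
    rw [gibbsTransN_succ hn,
      (isTransitionDensity_gibbsTransN hP hn).densityKernel_compDensity hP, pow_succ', ih]
    rfl

lemma tendsto_gibbsTrans_add (hpost : IsTransitionDensity volume (post f₁ f₂ y))
    (hf₂ : IsProbDensity volume f₂) (hf₂_cont : Continuous f₂) (hf₂_bdd : ∃ M, ∀ t, f₂ t ≤ M)
    {l : Filter ℝ} [l.IsCountablyGenerated]
    (hRID : ∀ z, Tendsto (fun θ => ∫ x in Iic (θ + z), post f₁ f₂ y θ x) l
      (𝓝 (∫ u in Iic z, f₂ u))) (h : ℝ) :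
    Tendsto (fun θ => gibbsTrans f₁ f₂ y θ (θ + h)) l (𝓝 (differenceDensity f₂ h)) := by
  obtain ⟨M, hM⟩ := hf₂_bdd
  let φ : BoundedContinuousFunction ℝ ℝ := .ofNormedAddCommGroup (fun s => f₂ (s - h))
    (hf₂_cont.comp (continuous_sub_right h)) M fun s => by
      rw [Real.norm_of_nonneg (hf₂.nonneg _)]; exact hM _
  have trans_eq (θ : ℝ) :
      gibbsTrans f₁ f₂ y θ (θ + h) = ∫ s, post f₁ f₂ y θ (θ + s) * φ s := by
    rw [gibbsTrans_eq_compDensity, compDensity, ← integral_add_left_eq_self _ θ]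
    simp only [add_sub_add_left_eq_sub, φ, BoundedContinuousFunction.coe_ofNormedAddCommGroup]
  simp only [trans_eq]
  refine tendsto_integral_mul_of_tendsto_setIntegral_Iic
    (fun θ => (hpost.isProbDensity θ).comp_const_add θ) hf₂ (fun z => ?_) φ
  refine (hRID z).congr fun θ => ?_
  have shift := (hpost.isProbDensity θ).densityMeasure_comp_const_add_real θ
    (measurableSet_Iic (a := θ + z))
  rw [preimage_const_add_Iic, add_sub_cancel_left,
    ((hpost.isProbDensity θ).comp_const_add θ).densityMeasure_real measurableSet_Iic,
    (hpost.isProbDensity θ).densityMeasure_real measurableSet_Iic] at shift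
  exact shift.symm

end Gibbs

theorem rid_implies_not_geometrically_ergodic_general (f₁ f₂ : ℝ → ℝ) (y : ℝ)
    (hf₁m : Measurable f₁) (hf₂c : Continuous f₂)
    (hf₁nonneg : ∀ t, 0 ≤ f₁ t) (hf₂pos : ∀ t, 0 < f₂ t)
    (hf₂bdd : ∃ M, ∀ t, f₂ t ≤ M) (hf₂prob : ∫ t, f₂ t = 1)
    (hcpos : ∀ θ, 0 < cnorm f₁ f₂ y θ)
    (hCint : Integrable (fun θ => cnorm f₁ f₂ y θ))
    (hRID : ∀ z : ℝ,
      Tendsto (fun θ => ∫ x in Iic (θ + z), post f₁ f₂ y θ x) atTop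
        (nhds (∫ u in Iic z, f₂ u))) :
    ¬ ∃ r : ℝ, 0 ≤ r ∧ r < 1 ∧ ∃ M : ℝ → ℝ, (∀ θ₀, 0 ≤ M θ₀) ∧
      ∀ θ₀ : ℝ, ∀ n : ℕ, 1 ≤ n →
        (∫ θ, |gibbsTransN f₁ f₂ y n θ₀ θ - cnorm f₁ f₂ y θ / (∫ θ', cnorm f₁ f₂ y θ')|) ≤
          M θ₀ * r ^ n := by
  rintro ⟨r, hr₀, hr₁, M, -, hM⟩
  have hf₂ : IsProbDensity volume f₂ := ⟨hf₂c.measurable, fun t => (hf₂pos t).le, hf₂prob⟩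
  have hpost : IsTransitionDensity volume (post f₁ f₂ y) :=
    isTransitionDensity_post hf₁m hf₁nonneg hf₂.measurable hf₂.nonneg hcpos
  have hP : IsTransitionDensity volume (gibbsTrans f₁ f₂ y) :=
    gibbsTrans_eq_compDensity (f₁ := f₁) ▸ hpost.comp hf₂.isTransitionDensity_sub
  have hw : IsProbDensity volume (stationaryDensity f₁ f₂ y) :=
    isProbDensity_stationaryDensity hf₁m hf₂.measurable hcpos hCint
  refine not_geometricallyErgodic_of_tendsto_even_increments hP hw
    (stationaryDensity_pos hcpos hCint)
    (stationaryDensity_mul_gibbsTrans_comm fun θ => (hcpos θ).ne') hf₂.differenceDensity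
    (differenceDensity_pos hf₂ hf₂pos hf₂bdd) (differenceDensity_neg f₂)
    (tendsto_gibbsTrans_add hpost hf₂ hf₂c hf₂bdd hRID) ?_
  exact geometricallyErgodic_of_integral_abs_sub_le
    (fun n hn => isTransitionDensity_gibbsTransN hP hn)
    (fun n hn => densityKernel_gibbsTrans_pow hP hn) hw hr₀ hr₁ hM

/-- if the model is robust in data (RID), then the marginal Θ-chain of the
centred Gibbs sampler is not geometrically ergodic. -/
theorem rid_implies_not_geometrically_ergodic (f₁ f₂ : ℝ → ℝ) (y : ℝ)
    (hf₁c : Continuous f₁) (hf₂c : Continuous f₂)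
    (hf₁pos : ∀ t, 0 < f₁ t) (hf₂pos : ∀ t, 0 < f₂ t)
    (hf₁bdd : ∃ M, ∀ t, f₁ t ≤ M) (hf₂bdd : ∃ M, ∀ t, f₂ t ≤ M)
    (hf₁sym : ∀ t, f₁ (-t) = f₁ t) (hf₂sym : ∀ t, f₂ (-t) = f₂ t)
    (hf₁prob : ∫ t, f₁ t = 1) (hf₂prob : ∫ t, f₂ t = 1)
    (hjint : ∀ θ, Integrable (fun x => fjoint f₁ f₂ y θ x))
    (hcpos : ∀ θ, 0 < cnorm f₁ f₂ y θ)
    (hCint : Integrable (fun θ => cnorm f₁ f₂ y θ))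
    (hRID : ∀ z : ℝ,
      Tendsto (fun θ => ∫ x in Iic (θ + z), post f₁ f₂ y θ x) (cocompact ℝ)
        (nhds (∫ u in Iic z, f₂ u))) :
    ¬ ∃ r : ℝ, 0 ≤ r ∧ r < 1 ∧ ∃ M : ℝ → ℝ, (∀ θ₀, 0 ≤ M θ₀) ∧
      ∀ θ₀ : ℝ, ∀ n : ℕ, 1 ≤ n →
        (∫ θ, |gibbsTransN f₁ f₂ y n θ₀ θ - cnorm f₁ f₂ y θ / (∫ θ', cnorm f₁ f₂ y θ')|) ≤
          M θ₀ * r ^ n :=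
  rid_implies_not_geometrically_ergodic_general f₁ f₂ y hf₁c.measurable hf₂c
    (fun t => (hf₁pos t).le) hf₂pos hf₂bdd hf₂prob hcpos hCint
    fun z => (hRID z).mono_left atTop_le_cocompact
end
end
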